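/- The language L = {w ∈ {a,b,c}* \ {ε} : for every factorization w = u·c·v·c·z in which v contains no occurrence of c, the numbers of a's and b's in v are equal} is not binary-PODWA-recognizable. -/

import Mathlib

/-- A deterministic weighted automaton (DWA) over alphabet `A` with state space `Q`. -/
structure DWA (A : Type) (Q : Type) where
  init : Q
  δ : Q → A → Q
  c : Q → A → ℤ

/-- The extended transition function `δ̂`. -/
def DWA.run {A Q : Type} (M : DWA A Q) (q : Q) (w : List A) : Q :=
  w.foldl M.δ q

/-- The accumulated weight of the run on `w` starting in state `q`. -/
def DWA.valFrom {A Q : Type} (M : DWA A Q) : Q → List A → ℤ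
  | _, [] => 0
  | q, x :: w => M.c q x + M.valFrom (M.δ q x) w

/-- The value `A(w)` of a word: the sum of the weights along the run from the initial state. -/
def DWA.val {A Q : Type} (M : DWA A Q) (w : List A) : ℤ :=
  M.valFrom M.init w

/-- The three-letter alphabet `{a, b, c}`. -/
inductive ABC where
  | a : ABC
  | b : ABC
  | c : ABC
deriving DecidableEq

/-!
The value of a word is additive along the run, so two prefixes leading to the same state can be
exchanged between two words without changing the sum of their values. For `xₙ = c aⁿ` and
`yₙ = bⁿ c` the word `xₘ yₙ` lies in the language exactly when `m = n`, while by pigeonhole some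
`xᵢ` and `xⱼ` with `i ≠ j` reach the same state: two positive values `xᵢ yᵢ`, `xⱼ yⱼ` would then
have the same sum as the two nonpositive values `xᵢ yⱼ`, `xⱼ yᵢ`.
-/

namespace DWA

variable {A Q : Type} (M : DWA A Q)

theorem valFrom_append (q : Q) (u v : List A) :
    M.valFrom q (u ++ v) = M.valFrom q u + M.valFrom (M.run q u) v := by
  induction u generalizing q with
  | nil => exact (zero_add _).symm
  | cons x u ih =>
    calc M.c q x + M.valFrom (M.δ q x) (u ++ v)
        = M.c q x + (M.valFrom (M.δ q x) u + M.valFrom (M.run (M.δ q x) u) v) := by rw [ih]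
      _ = M.valFrom q (x :: u) + M.valFrom (M.run q (x :: u)) v := (add_assoc ..).symm

theorem val_append_add_val_append_comm {x x' : List A}
    (h : M.run M.init x = M.run M.init x') (y y' : List A) :
    M.val (x ++ y) + M.val (x' ++ y') = M.val (x ++ y') + M.val (x' ++ y) := by
  simp only [val, valFrom_append, h]
  ring

theorem not_forall_val_append_pos_iff_eq [Finite Q] {ι : Type*} [Infinite ι]
    (x y : ι → List A) : ¬ ∀ i j, 0 < M.val (x i ++ y j) ↔ i = j := by
  intro h
  obtain ⟨i, j, hij, hrun⟩ :=
    Finite.exists_ne_map_eq_of_infinite fun i => M.run M.init (x i)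
  have hii : 0 < M.val (x i ++ y i) := (h i i).2 rfl
  have hjj : 0 < M.val (x j ++ y j) := (h j j).2 rfl
  have hi_j : M.val (x i ++ y j) ≤ 0 := not_lt.1 (mt (h i j).1 hij)
  have hj_i : M.val (x j ++ y i) ≤ 0 := not_lt.1 (mt (h j i).1 hij.symm)
  linarith [M.val_append_add_val_append_comm hrun (y i) (y j)]

end DWA

theorem cons_append_singleton_eq_append_cons_append_cons_iff {α : Type*} {c : α} {w : List α}
    (hw : c ∉ w) (u v z : List α) :
    c :: w ++ [c] = u ++ c :: v ++ c :: z ↔ u = [] ∧ v = w ∧ z = [] := by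
  cases u with
  | nil =>
    have h : w ++ [c] = v ++ c :: z ↔ w = v ∧ c = c ∧ [] = z :=
      List.append_cons_inj_of_notMem hw List.not_mem_nil
    simpa [eq_comm] using h
  | cons d u =>
    have h : w ++ [c] = u ++ c :: (v ++ c :: z) ↔ w = u ∧ c = c ∧ [] = v ++ c :: z :=
      List.append_cons_inj_of_notMem hw List.not_mem_nil
    simp [h]

/-- The membership condition of the language: every `c`-free infix of `w` delimited by two
occurrences of `c` contains equally many `a`'s and `b`'s. The empty word, which the language
excludes, satisfies it vacuously. -/
def BalancedBetweenCs (w : List ABC) : Prop :=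
  ∀ u v z : List ABC, w = u ++ ABC.c :: v ++ ABC.c :: z → ABC.c ∉ v →
    v.count ABC.a = v.count ABC.b

theorem balancedBetweenCs_cons_append_singleton_iff {w : List ABC} (hw : ABC.c ∉ w) :
    BalancedBetweenCs (ABC.c :: w ++ [ABC.c]) ↔ w.count ABC.a = w.count ABC.b := by
  simp only [BalancedBetweenCs, cons_append_singleton_eq_append_cons_append_cons_iff hw]
  constructor
  · intro h
    exact h [] w [] ⟨rfl, rfl, rfl⟩ hw
  · rintro h _ _ _ ⟨rfl, rfl, rfl⟩ _
    exact h

theorem balancedBetweenCs_replicate_iff (m n : ℕ) :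
    BalancedBetweenCs
      ((ABC.c :: List.replicate m ABC.a) ++ (List.replicate n ABC.b ++ [ABC.c])) ↔ m = n := by
  have hw : ABC.c ∉ List.replicate m ABC.a ++ List.replicate n ABC.b := by simp
  simpa [List.count_replicate] using balancedBetweenCs_cons_append_singleton_iff hw

/-- the language of nonempty words `w` over `{a, b, c}` such that every
`c`-free infix of `w` lying between two occurrences of `c` contains equally many `a`'s and
`b`'s is not binary-PODWA-recognizable. -/
theorem balanced_between_cs_not_binary_podwa_recognizable :
    ¬ ∃ (Q : Type) (_ : Fintype Q) (M : DWA ABC Q),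
        ∀ w : List ABC, w ≠ [] →
          (0 < M.val w ↔
            ∀ u v z : List ABC,
              w = u ++ ABC.c :: v ++ ABC.c :: z → ABC.c ∉ v →
                v.count ABC.a = v.count ABC.b) := by
  rintro ⟨Q, _, M, hM⟩
  refine M.not_forall_val_append_pos_iff_eq (fun m : ℕ => ABC.c :: List.replicate m ABC.a)
    (fun n => List.replicate n ABC.b ++ [ABC.c]) fun m n => ?_
  exact (hM _ (by simp)).trans (balancedBetweenCs_replicate_iff m n)
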